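/- arXiv:1204.0287 — 2 statements merged into one kernel-verified Lean document; each statement's English description precedes it below -/
import Mathlib

section
/- Let G be a finite connected bipartite simple graph that is thick (every vertex has degree at least 3), has diameter m for some integer m ≥ 2, and has girth 2m. Then m ∈ {2, 3, 4, 6, 8}. -/
/-!
Let `A` be the adjacency matrix of a generalised `m`-gon, and let `Fᵢ(u, v)` count the walks from
`u` to `v` without immediate reversals whose length is at most `i` and has the parity of `i`. The
`Fᵢ` satisfy a three-term recursion with coefficients `A` and the degrees. Since the girth is `2m`,
for `i < m` the entry `Fᵢ(u, v)` is `1` or `0` according to whether `dist u v ≤ i` has the parity of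
`i`. For opposite `u`, `v` this makes `F_m(u, v)` the degree of `u`, and the symmetry of `F_m` shows
that opposite vertices have equal degree. By thickness, two neighbours of a vertex have a common
opposite vertex, so the degrees alternate between two values `s + 1` and `t + 1`.

If `m = n + 1` is odd then `s = t`, and `Fᵢ = Eᵢ(A)` for the Dickson polynomials `Eᵢ` of the second
kind with parameter `Q = s`. If `m = 2(n + 1)` then `F_{2i+1} = Eᵢ(M) A` with `M = A² - (s + t)` and
`Q = st`. As `F_{m-1}` is constant on each parity class of distances, it yields a polynomial
annihilating `A` or `M`, and the diagonals of the other `Fᵢ` give traces. The Christoffel–Darboux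
identity then computes the multiplicity of each zero `y = 2√Q cos (kπ / (n + 1))` of `Eₙ`; that it
is an integer makes `(Q + 1 - y)(y + c) / (4Q - y²)` rational, where `c = s + 1` for odd `m` and
`c = s + t` for even `m`. Comparing this for `y` and `-y` shows that `y²` is rational, hence so is
`cos (2π / (n + 1))`, which by Niven's theorem leaves `n + 1 ∈ {1, 2, 3, 4, 6}`. For even `m`, `y`
itself is rational too, which excludes `n + 1 = 6` because `cos (π / 6) / cos (π / 3) = √3`.
-/

open Finset Polynomial SimpleGraph

section Walks

variable {V : Type*} {G : SimpleGraph V} {u v w : V}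

lemma exists_isCycle_length_le_of_isPath_of_ne {p q : G.Walk u v} (hp : p.IsPath) (hq : q.IsPath)
    (hpq : p ≠ q) :
    ∃ (a : V) (c : G.Walk a a), c.IsCycle ∧ c.length ≤ p.length + q.length := by
  set H : SimpleGraph V := fromEdgeSet {e | e ∈ p.edges ++ q.edges} with hH
  have edges_of_mem : ∀ e ∈ H.edgeSet, e ∈ p.edges ++ q.edges := by
    intro e he
    rw [hH, edgeSet_fromEdgeSet] at he
    exact he.1
  have mem_of_edges : ∀ e ∈ p.edges ++ q.edges, e ∈ G.edgeSet ∧ e ∈ H.edgeSet := by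
    intro e he
    have heG : e ∈ G.edgeSet :=
      (List.mem_append.1 he).elim (p.edges_subset_edgeSet ·) (q.edges_subset_edgeSet ·)
    rw [hH, edgeSet_fromEdgeSet]
    exact ⟨heG, he, G.not_isDiag_of_mem_edgeSet heG⟩
  have hHG : H ≤ G :=
    edgeSet_subset_edgeSet.1 fun e he => (mem_of_edges e (edges_of_mem e he)).1
  have hpH : ∀ e ∈ p.edges, e ∈ H.edgeSet := fun e he =>
    (mem_of_edges e (List.mem_append_left _ he)).2
  have hqH : ∀ e ∈ q.edges, e ∈ H.edgeSet := fun e he =>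
    (mem_of_edges e (List.mem_append_right _ he)).2
  have not_acyclic : ¬ H.IsAcyclic := by
    intro hH
    have heq := (hH.subsingleton_path u v).elim ⟨p.transfer H hpH, hp.transfer hpH⟩
      ⟨q.transfer H hqH, hq.transfer hqH⟩
    have hsupp := congrArg (fun r : H.Path u v => r.1.support) heq
    simp only [Walk.support_transfer] at hsupp
    exact hpq (Walk.ext_support hsupp)
  simp only [IsAcyclic, not_forall, not_not] at not_acyclic
  obtain ⟨a, c, hc⟩ := not_acyclic
  refine ⟨a, c.mapLe hHG, hc.mapLe hHG, ?_⟩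
  have hsub : c.edges ⊆ p.edges ++ q.edges := fun e he =>
    edges_of_mem e (c.edges_subset_edgeSet he)
  simpa using (hc.isCircuit.isTrail.edges_nodup.subperm hsub).length_le

lemma isPath_eq_of_length_add_length_lt_girth {p q : G.Walk u v} (hp : p.IsPath)
    (hq : q.IsPath) (hlen : p.length + q.length < G.girth) : p = q := by
  by_contra hpq
  obtain ⟨a, c, hc, hle⟩ := exists_isCycle_length_le_of_isPath_of_ne hp hq hpq
  exact (girth_le_length hc).not_gt (hle.trans_lt hlen)

lemma exists_adj_dist_add_one_eq (h : G.dist u v ≠ 0) :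
    ∃ w, G.Adj u w ∧ G.dist w v + 1 = G.dist u v := by
  obtain ⟨p, hp⟩ := exists_walk_of_dist_ne_zero h
  cases p with
  | nil => simp at h
  | @cons _ x _ hux p =>
    have hle := dist_le p
    have hstep := hux.diff_dist_adj (u := v)
    rw [Walk.length_cons] at hp
    rw [dist_comm (v := x), dist_comm (v := u)] at hstep
    exact ⟨x, hux, by omega⟩

lemma even_dist_iff_not_of_adj (hconn : G.Connected) (hbip : G.Colorable 2) (huw : G.Adj u w)
    (v : V) : Even (G.dist w v) ↔ ¬ Even (G.dist u v) := by
  obtain ⟨c⟩ := hbip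
  let b : G.Coloring Bool := G.recolorOfEquiv finTwoEquiv c
  obtain ⟨p, hp⟩ := hconn.exists_walk_length_eq_dist u v
  obtain ⟨q, hq⟩ := hconn.exists_walk_length_eq_dist w v
  have hne : b u ≠ b w := b.valid huw
  rw [← hp, ← hq, b.even_length_iff_congr, b.even_length_iff_congr]
  revert hne
  cases b u <;> cases b v <;> cases b w <;> simp

lemma dist_add_one_eq_or_eq_add_one_of_adj (hconn : G.Connected) (hbip : G.Colorable 2)
    (huw : G.Adj u w) (v : V) :
    G.dist w v + 1 = G.dist u v ∨ G.dist w v = G.dist u v + 1 := by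
  have hparity := even_dist_iff_not_of_adj hconn hbip huw v
  have hstep := huw.diff_dist_adj (u := v)
  rw [dist_comm (v := w), dist_comm (v := u)] at hstep
  grind

end Walks

section NonBacktracking

variable {V : Type*} [Fintype V] [DecidableEq V] (R : Type*) [Ring R]
  (G : SimpleGraph V) [DecidableRel G.Adj]

/-- The matrices counting non-backtracking walks: the `(u, v)` entry of `nonBacktrackingSum R G i`
is the number of walks from `u` to `v` without immediate reversals whose length is at most `i` and
has the parity of `i`. Summing over these lengths makes the three-term recursion hold from the
start, without the exceptional step that the walks of length exactly `i` need. -/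
def nonBacktrackingSum : ℕ → Matrix V V R
  | 0 => 1
  | 1 => G.adjMatrix R
  | i + 2 => G.adjMatrix R * nonBacktrackingSum (i + 1) -
      (G.degMatrix R - 1) * nonBacktrackingSum i

lemma nonBacktrackingSum_add_two (i : ℕ) :
    nonBacktrackingSum R G (i + 2) = G.adjMatrix R * nonBacktrackingSum R G (i + 1) -
      (G.degMatrix R - 1) * nonBacktrackingSum R G i :=
  rfl

lemma nonBacktrackingSum_add_two' (i : ℕ) :
    nonBacktrackingSum R G (i + 2) = nonBacktrackingSum R G (i + 1) * G.adjMatrix R -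
      nonBacktrackingSum R G i * (G.degMatrix R - 1) := by
  induction i using Nat.twoStepInduction with
  | zero | one =>
    simp only [nonBacktrackingSum]
    noncomm_ring
  | more i ih₀ ih₁ =>
    set A := G.adjMatrix R
    set E := G.degMatrix R - 1
    set F := nonBacktrackingSum R G
    calc F (i + 2 + 2) = A * F (i + 1 + 2) - E * F (i + 2) := rfl
      _ = A * (F (i + 2) * A - F (i + 1) * E) - E * (F (i + 1) * A - F i * E) := by rw [ih₁, ih₀]
      _ = (A * F (i + 2) - E * F (i + 1)) * A - (A * F (i + 1) - E * F i) * E := by noncomm_ring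

lemma nonBacktrackingSum_isSymm (S : Type*) [CommRing S] (i : ℕ) :
    (nonBacktrackingSum S G i).IsSymm := by
  induction i using Nat.twoStepInduction with
  | zero => exact Matrix.isSymm_one
  | one => exact G.isSymm_adjMatrix
  | more i ih₀ ih₁ =>
    rw [Matrix.IsSymm, nonBacktrackingSum_add_two', Matrix.transpose_sub, Matrix.transpose_mul,
      Matrix.transpose_mul, ih₀, ih₁, Matrix.transpose_sub, Matrix.transpose_one,
      G.isSymm_adjMatrix, G.isSymm_degMatrix S,
      ← nonBacktrackingSum_add_two, nonBacktrackingSum_add_two']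

lemma nonBacktrackingSum_add_two_apply (i : ℕ) (u v : V) :
    nonBacktrackingSum R G (i + 2) u v =
      ∑ w ∈ G.neighborFinset u, nonBacktrackingSum R G (i + 1) w v -
        (G.degree u - 1) * nonBacktrackingSum R G i u v := by
  rw [nonBacktrackingSum_add_two, Matrix.sub_apply, adjMatrix_mul_apply, sub_mul,
    degMatrix, Matrix.sub_apply, Matrix.diagonal_mul, one_mul, sub_mul, one_mul]

end NonBacktracking

/-- A generalised `m`-gon, given by its incidence graph. The condition `2 ≤ m` excludes the junk
value `0` that `diam` takes on graphs of infinite diameter and `girth` on acyclic graphs. -/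
structure IsGeneralizedPolygon {V : Type*} (G : SimpleGraph V) (m : ℕ) : Prop where
  connected : G.Connected
  colorable_two : G.Colorable 2
  two_le : 2 ≤ m
  diam_eq : G.diam = m
  girth_eq : G.girth = 2 * m

namespace IsGeneralizedPolygon

variable {V : Type*} {G : SimpleGraph V} {m : ℕ} {u v w x : V}

lemma dist_le (P : IsGeneralizedPolygon G m) (u v : V) : G.dist u v ≤ m := by
  have hdiam : G.diam ≠ 0 := by
    rw [P.diam_eq]
    exact (zero_lt_two.trans_le P.two_le).ne'
  exact P.diam_eq ▸ dist_le_diam (ediam_ne_top_of_diam_ne_zero hdiam)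

lemma exists_dist_eq (P : IsGeneralizedPolygon G m) : ∃ u v, G.dist u v = m := by
  have := P.connected.nonempty
  exact P.diam_eq ▸ G.exists_dist_eq_diam

lemma eq_of_adj_of_dist_add_one_eq (P : IsGeneralizedPolygon G m) (huv : G.dist u v < m)
    (huw : G.Adj u w) (hux : G.Adj u x) (hw : G.dist w v + 1 = G.dist u v)
    (hx : G.dist x v + 1 = G.dist u v) : w = x := by
  obtain ⟨p, hp⟩ := P.connected.exists_walk_length_eq_dist w v
  obtain ⟨q, hq⟩ := P.connected.exists_walk_length_eq_dist x v
  have hp' : (Walk.cons huw p).length = G.dist u v := by rw [Walk.length_cons, hp, hw]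
  have hq' : (Walk.cons hux q).length = G.dist u v := by rw [Walk.length_cons, hq, hx]
  have hpq := isPath_eq_of_length_add_length_lt_girth (Walk.isPath_of_length_eq_dist _ hp')
    (Walk.isPath_of_length_eq_dist _ hq') (by rw [hp', hq', P.girth_eq]; omega)
  simpa using congrArg Walk.snd hpq

lemma dist_eq_add_one_of_ne (P : IsGeneralizedPolygon G m) (huv : G.dist u v < m)
    (huw : G.Adj u w) (hux : G.Adj u x) (hw : G.dist w v + 1 = G.dist u v) (hwx : w ≠ x) :
    G.dist x v = G.dist u v + 1 :=
  (dist_add_one_eq_or_eq_add_one_of_adj P.connected P.colorable_two hux v).resolve_left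
    fun hx => hwx (P.eq_of_adj_of_dist_add_one_eq huv huw hux hw hx)

lemma dist_eq_of_adj_of_dist_eq {k : ℕ} (P : IsGeneralizedPolygon G (k + 1))
    (huv : G.dist u v = k + 1) (huw : G.Adj u w) : G.dist w v = k := by
  have hle := P.dist_le w v
  have hstep := dist_add_one_eq_or_eq_add_one_of_adj P.connected P.colorable_two huw v
  omega

section Finite

variable [Fintype V] [DecidableRel G.Adj]

lemma exists_adj_dist_eq_add_one (P : IsGeneralizedPolygon G m) (hu : 2 ≤ G.degree u)
    (huv : G.dist u v < m) : ∃ w, G.Adj u w ∧ G.dist w v = G.dist u v + 1 := by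
  obtain ⟨w, hw, x, hx, hwx⟩ := one_lt_card.1 (G.card_neighborFinset_eq_degree u ▸ hu)
  rw [mem_neighborFinset] at hw hx
  obtain hfar | hfar := (dist_add_one_eq_or_eq_add_one_of_adj P.connected P.colorable_two hw v).symm
  · exact ⟨w, hw, hfar⟩
  · exact ⟨x, hx, P.dist_eq_add_one_of_ne huv hw hx hfar hwx⟩

lemma exists_dist_eq_add_one_and_dist_eq (P : IsGeneralizedPolygon G m)
    (hdeg : ∀ v, 2 ≤ G.degree v) (hwx : G.Adj w x) {k : ℕ} (hk : k < m) :
    ∃ z, G.dist w z = k + 1 ∧ G.dist x z = k := by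
  induction k with
  | zero => exact ⟨x, dist_eq_one_iff_adj.2 hwx, dist_self⟩
  | succ k ih =>
    obtain ⟨z, hwz, hxz⟩ := ih (by omega)
    rw [SimpleGraph.dist_comm] at hwz
    obtain ⟨y, hzy, hyw⟩ := P.exists_adj_dist_eq_add_one (hdeg z) (hwz ▸ hk)
    rw [SimpleGraph.dist_comm, hwz] at hyw
    have hxy := dist_add_one_eq_or_eq_add_one_of_adj P.connected P.colorable_two hzy x
    have hwy := dist_add_one_eq_or_eq_add_one_of_adj P.connected P.colorable_two hwx y
    rw [SimpleGraph.dist_comm, SimpleGraph.dist_comm (u := z)] at hxy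
    exact ⟨y, by omega, by omega⟩

lemma sum_neighborFinset_dist_add_one_eq {R : Type*} [AddCommMonoidWithOne R]
    (P : IsGeneralizedPolygon G m) (h₀ : G.dist u v ≠ 0) (hm : G.dist u v < m) :
    ∑ w ∈ G.neighborFinset u, (if G.dist w v + 1 = G.dist u v then 1 else 0 : R) = 1 := by
  obtain ⟨w, huw, hw⟩ := exists_adj_dist_add_one_eq h₀
  rw [sum_eq_single_of_mem w ((G.mem_neighborFinset u w).2 huw), if_pos hw]
  intro x hux hxw
  rw [mem_neighborFinset] at hux
  exact if_neg fun hx => hxw (P.eq_of_adj_of_dist_add_one_eq hm hux huw hx hw)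

section Entries

variable [DecidableEq V] {R : Type*} [Ring R]

theorem nonBacktrackingSum_apply (P : IsGeneralizedPolygon G m) {i : ℕ} (hi : i < m) (u v : V) :
    nonBacktrackingSum R G i u v =
      if G.dist u v ≤ i ∧ Even (G.dist u v + i) then 1 else 0 := by
  induction i using Nat.twoStepInduction generalizing u with
  | zero =>
    rw [nonBacktrackingSum, Matrix.one_apply]
    exact if_congr (by grind [P.connected.dist_eq_zero_iff]) rfl rfl
  | one =>
    rw [nonBacktrackingSum, adjMatrix_apply]
    exact if_congr (by grind [dist_eq_one_iff_adj, P.connected.dist_eq_zero_iff]) rfl rfl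
  | more i ih₀ ih₁ =>
    have hstep {w : V} (hw : w ∈ G.neighborFinset u) :=
      dist_add_one_eq_or_eq_add_one_of_adj P.connected P.colorable_two
        ((G.mem_neighborFinset u w).1 hw) v
    rw [nonBacktrackingSum_add_two_apply, ih₀ (by omega),
      sum_congr rfl fun w _ => ih₁ (by omega) w]
    obtain hle | heq | hnot : (G.dist u v ≤ i ∧ Even (G.dist u v + i)) ∨ G.dist u v = i + 2 ∨
        ¬ (G.dist u v ≤ i + 2 ∧ Even (G.dist u v + (i + 2))) := by grind
    · have hsum : ∀ w ∈ G.neighborFinset u,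
          (if G.dist w v ≤ i + 1 ∧ Even (G.dist w v + (i + 1)) then 1 else 0 : R) = 1 :=
        fun w hw => if_pos (by grind)
      rw [sum_congr rfl hsum, if_pos hle, if_pos (by grind)]
      simp
    · have hsum : ∀ w ∈ G.neighborFinset u,
          (if G.dist w v ≤ i + 1 ∧ Even (G.dist w v + (i + 1)) then 1 else 0 : R) =
            if G.dist w v + 1 = G.dist u v then 1 else 0 :=
        fun w hw => if_congr (by grind) rfl rfl
      rw [sum_congr rfl hsum, P.sum_neighborFinset_dist_add_one_eq (by omega) (by omega),
        if_neg (by omega), if_pos (by grind), mul_zero, sub_zero]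
    · have hsum : ∀ w ∈ G.neighborFinset u,
          (if G.dist w v ≤ i + 1 ∧ Even (G.dist w v + (i + 1)) then 1 else 0 : R) = 0 :=
        fun w hw => if_neg (by grind)
      rw [sum_congr rfl hsum, if_neg (by grind), if_neg hnot]
      simp

lemma nonBacktrackingSum_apply_of_succ {k : ℕ} (P : IsGeneralizedPolygon G (k + 1)) (u v : V) :
    nonBacktrackingSum R G k u v = if Even (G.dist u v + k) then 1 else 0 := by
  rw [P.nonBacktrackingSum_apply k.lt_succ_self]
  have hle := P.dist_le u v
  exact if_congr (by grind) rfl rfl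

lemma nonBacktrackingSum_apply_of_dist_eq (P : IsGeneralizedPolygon G m) (huv : G.dist u v = m) :
    nonBacktrackingSum R G m u v = G.degree u := by
  obtain ⟨k, rfl⟩ := Nat.exists_eq_add_of_le' P.two_le
  have hsum : ∀ w ∈ G.neighborFinset u, nonBacktrackingSum R G (k + 1) w v = 1 := by
    intro w hw
    rw [nonBacktrackingSum_apply_of_succ P,
      P.dist_eq_of_adj_of_dist_eq huv ((G.mem_neighborFinset u w).1 hw), if_pos (Even.add_self _)]
  rw [nonBacktrackingSum_add_two_apply, sum_congr rfl hsum,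
    P.nonBacktrackingSum_apply (by omega), if_neg (by omega)]
  simp

end Entries

theorem degree_eq_of_dist_eq (P : IsGeneralizedPolygon G m) (huv : G.dist u v = m) :
    G.degree u = G.degree v := by
  classical
  have hsymm := (nonBacktrackingSum_isSymm G ℤ m).apply v u
  rw [P.nonBacktrackingSum_apply_of_dist_eq huv,
    P.nonBacktrackingSum_apply_of_dist_eq (SimpleGraph.dist_comm.trans huv)] at hsymm
  exact_mod_cast hsymm

theorem degree_eq_of_adj_of_adj (P : IsGeneralizedPolygon G m) (hthick : ∀ v, 3 ≤ G.degree v)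
    (hwu : G.Adj w u) (hwv : G.Adj w v) : G.degree u = G.degree v := by
  classical
  obtain ⟨k, rfl⟩ := Nat.exists_eq_add_of_le' P.two_le
  obtain ⟨x, hx, hne⟩ := exists_mem_notMem_of_card_lt_card (s := {u, v})
    (t := G.neighborFinset w) (card_le_two.trans_lt (G.card_neighborFinset_eq_degree w ▸ hthick w))
  simp only [mem_insert, mem_singleton, not_or] at hne
  rw [mem_neighborFinset] at hx
  obtain ⟨z, hwz, hxz⟩ := P.exists_dist_eq_add_one_and_dist_eq
    (fun v => (Nat.le_succ 2).trans (hthick v)) hx (k := k) (by omega)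
  have opposite {a : V} (ha : G.Adj w a) (hax : x ≠ a) : G.dist a z = k + 2 := by
    rw [P.dist_eq_add_one_of_ne (by omega) hx ha (by omega) hax, hwz]
  rw [P.degree_eq_of_dist_eq (opposite hwu hne.1), P.degree_eq_of_dist_eq (opposite hwv hne.2)]

end Finite

end IsGeneralizedPolygon

/-- A graph has order `(s, t)` if the two ends of each edge have degrees `s + 1` and `t + 1` in some
order. For the incidence graph of a geometry this says that every line has `s + 1` points and every
point is on `t + 1` lines, or the other way round. -/
structure HasOrder {V : Type*} [Fintype V] (G : SimpleGraph V) [DecidableRel G.Adj] (s t : ℕ) :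
    Prop where
  degree_eq (u : V) : G.degree u = s + 1 ∨ G.degree u = t + 1
  degree_add_degree {u v : V} (h : G.Adj u v) : G.degree u + G.degree v = s + t + 2

section Order

variable {V : Type*} [Fintype V] {G : SimpleGraph V} [DecidableRel G.Adj] {s t : ℕ}

lemma exists_hasOrder_of_connected (hconn : G.Connected)
    (hdeg : ∀ ⦃w u v : V⦄, G.Adj w u → G.Adj w v → G.degree u = G.degree v) {k : ℕ}
    (hk : ∀ v, k + 1 ≤ G.degree v) : ∃ s t, k ≤ s ∧ k ≤ t ∧ HasOrder G s t := by
  obtain ⟨a⟩ := hconn.nonempty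
  obtain ⟨b, hab⟩ := (G.degree_pos_iff_exists_adj a).1 (Nat.succ_pos k |>.trans_le (hk a))
  obtain ⟨s, hs⟩ := Nat.exists_eq_add_of_le' (Nat.le_of_add_left_le (hk a))
  obtain ⟨t, ht⟩ := Nat.exists_eq_add_of_le' (Nat.le_of_add_left_le (hk b))
  have alternate {u w : V} (p : G.Walk u w) (hw : w = a) :
      (G.degree u = s + 1 ∧ ∀ x, G.Adj u x → G.degree x = t + 1) ∨
        (G.degree u = t + 1 ∧ ∀ x, G.Adj u x → G.degree x = s + 1) := by
    induction p with
    | nil => exact .inl ⟨hw ▸ hs, fun x hx => ht ▸ hdeg (hw ▸ hx) hab⟩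
    | cons huv _ ih =>
      refine (ih hw).symm.imp ?_ ?_ <;>
      · rintro ⟨hv, hnbr⟩
        exact ⟨hnbr _ huv.symm, fun x hx => hv ▸ hdeg hx huv⟩
  have order (u : V) := alternate (hconn.preconnected u a).some rfl
  have hka := hk a
  have hkb := hk b
  refine ⟨s, t, by omega, by omega, fun u => (order u).imp And.left And.left, fun {u v} huv => ?_⟩
  obtain ⟨hu, hnbr⟩ | ⟨hu, hnbr⟩ := order u <;>
  · rw [hu, hnbr v huv]
    ring

namespace HasOrder

lemma sum_degree_neighborFinset (h : HasOrder G s t) (u : V) :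
    ∑ v ∈ G.neighborFinset u, G.degree v = (s + 1) * (t + 1) := by
  have hnbr : ∀ v ∈ G.neighborFinset u, G.degree v = s + t + 2 - G.degree u := fun v hv =>
    Nat.eq_sub_of_add_eq' (h.degree_add_degree ((G.mem_neighborFinset u v).1 hv))
  rw [sum_congr rfl hnbr, sum_const, card_neighborFinset_eq_degree, smul_eq_mul]
  obtain hu | hu := h.degree_eq u
  · rw [hu, show s + t + 2 - (s + 1) = t + 1 by omega]
  · rw [hu, show s + t + 2 - (t + 1) = s + 1 by omega, mul_comm]

lemma two_mul_degree_sub_eq (h : HasOrder G s t) {u v : V} (p : G.Walk u v) :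
    (2 * G.degree u - (s + t + 2) : ℤ) = (-1) ^ p.length * (2 * G.degree v - (s + t + 2)) := by
  induction p with
  | nil => simp
  | cons huv p ih =>
    have hsum := h.degree_add_degree huv
    zify at hsum
    rw [Walk.length_cons, pow_succ]
    linear_combination 2 * hsum - ih

lemma eq_of_isGeneralizedPolygon_of_odd (h : HasOrder G s t) {m : ℕ}
    (P : IsGeneralizedPolygon G m) (hm : Odd m) : s = t := by
  obtain ⟨u, v, huv⟩ := P.exists_dist_eq
  obtain ⟨p, hp⟩ := P.connected.exists_walk_length_eq_dist u v
  have halternate := h.two_mul_degree_sub_eq p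
  rw [hp, huv, hm.neg_one_pow, P.degree_eq_of_dist_eq huv] at halternate
  have hdeg := h.degree_eq v
  omega

lemma isRegularOfDegree (h : HasOrder G s s) : G.IsRegularOfDegree (s + 1) := fun u =>
  (h.degree_eq u).elim id id

variable [DecidableEq V] (R : Type*) [CommRing R]

lemma adjMatrix_mul_degMatrix_sub_one (h : HasOrder G s t) :
    G.adjMatrix R * (G.degMatrix R - 1) = (↑(s + t) - (G.degMatrix R - 1)) * G.adjMatrix R := by
  ext u v
  rw [degMatrix, ← Matrix.diagonal_one, Matrix.diagonal_sub, ← Matrix.diagonal_natCast,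
    Matrix.diagonal_sub, Matrix.mul_diagonal, Matrix.diagonal_mul, adjMatrix_apply]
  split_ifs with huv
  · have hsum := congrArg (Nat.cast : ℕ → R) (h.degree_add_degree huv)
    push_cast at hsum ⊢
    linear_combination hsum
  · simp

lemma sub_degMatrix_sub_one_mul (h : HasOrder G s t) :
    (↑(s + t) - (G.degMatrix R - 1)) * (G.degMatrix R - 1) = ↑(s * t) := by
  rw [degMatrix, ← Matrix.diagonal_one, Matrix.diagonal_sub, ← Matrix.diagonal_natCast,
    ← Matrix.diagonal_natCast, Matrix.diagonal_sub, Matrix.diagonal_mul_diagonal]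
  congr 1
  funext u
  obtain hu | hu := h.degree_eq u <;>
  · rw [hu]
    push_cast
    ring

end HasOrder

end Order

section Dickson

lemma dickson_two_kind_zero {R : Type*} [CommRing R] (a : R) : dickson 2 a 0 = 1 := by
  rw [dickson_zero]
  norm_num

variable {K : Type*} [Field K]

lemma dickson_two_christoffel_darboux {a : K} (ha : a ≠ 0) (y : K) (n : ℕ) :
    (X - C y) * ∑ i ∈ range (n + 1), C ((dickson 2 a i).eval y / a ^ i) * dickson 2 a i =
      C (a ^ n)⁻¹ * (C ((dickson 2 a n).eval y) * dickson 2 a (n + 1) -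
        C ((dickson 2 a (n + 1)).eval y) * dickson 2 a n) := by
  induction n with
  | zero =>
    simp only [zero_add, sum_range_one, pow_zero, dickson_two_kind_zero, dickson_one, eval_one,
      eval_X, div_one, inv_one, C_1, one_mul, mul_one]
  | succ n ih =>
    have hinv : C (a ^ (n + 1))⁻¹ * C a = C (a ^ n)⁻¹ := by
      rw [← C_mul, pow_succ, mul_inv, inv_mul_cancel_right₀ ha]
    rw [sum_range_succ, mul_add, ih, dickson_add_two 2 a n, div_eq_mul_inv, C_mul]
    simp only [eval_sub, eval_mul, eval_X, eval_C, C_sub, C_mul, ← hinv]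
    ring

lemma exists_nat_trace_eq_of_isIdempotentElem {V : Type*} [Fintype V] {M : Matrix V V K}
    (hM : IsIdempotentElem M) : ∃ k : ℕ, M.trace = k := by
  classical
  have hproj := (LinearMap.isProj_range_iff_isIdempotentElem (Matrix.toLin' M)).2 <| by
    rw [IsIdempotentElem, Module.End.mul_eq_comp, ← Matrix.toLin'_mul, hM]
  exact ⟨_, by rw [← Matrix.trace_toLin'_eq, hproj.trace]⟩

lemma exists_nat_trace_aeval_eq {V : Type*} [Fintype V] [DecidableEq V] {M : Matrix V V K} {a : K}
    {f : K[X]} (h : aeval M ((X - C a) * f) = 0) :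
    ∃ k : ℕ, (aeval M f).trace = k * f.eval a := by
  have hsq : aeval M f * aeval M f = f.eval a • aeval M f := by
    obtain ⟨g, hg⟩ := X_sub_C_dvd_sub_C_eval (a := a) (p := f)
    have hzero : aeval M ((f - C (f.eval a)) * f) = 0 := by
      rw [hg, mul_right_comm, map_mul, h, zero_mul]
    rwa [sub_mul, map_sub, map_mul, map_mul, aeval_C, ← Algebra.smul_def, sub_eq_zero] at hzero
  obtain ha | ha := eq_or_ne (f.eval a) 0
  · refine ⟨0, ?_⟩
    rw [Nat.cast_zero, zero_mul]
    exact (Matrix.isNilpotent_trace_of_isNilpotent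
      ⟨2, by rw [pow_two, hsq, ha, zero_smul]⟩).eq_zero
  · obtain ⟨k, hk⟩ := exists_nat_trace_eq_of_isIdempotentElem
      (M := (f.eval a)⁻¹ • aeval M f) <| by
        rw [IsIdempotentElem, smul_mul_smul_comm, hsq, smul_smul, mul_assoc, inv_mul_cancel₀ ha,
          mul_one]
    rw [Matrix.trace_smul, smul_eq_mul, inv_mul_eq_iff_eq_mul₀ ha, mul_comm] at hk
    exact ⟨k, hk⟩

/-- `M` is annihilated by `(X - (Q + 1)) (X + c) Eₙ`, where `Eᵢ = dickson 2 Q i`, and the traces of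
`(M + c) Eᵢ(M)` for `i ≤ n` are all equal to `τ`. This is what the proof uses of the spectrum of a
generalised polygon: the traces determine the multiplicities of the zeros of `Eₙ` as eigenvalues
of `M`. -/
structure HasDicksonTraces {R V : Type*} [CommRing R] [Fintype V] [DecidableEq V]
    (M : Matrix V V R) (Q c τ : R) (n : ℕ) : Prop where
  aeval_eq_zero : aeval M ((X - C (Q + 1)) * (X + C c) * dickson 2 Q n) = 0
  trace_aeval {i : ℕ} (hi : i ≤ n) : (aeval M ((X + C c) * dickson 2 Q i)).trace = τ

namespace HasDicksonTraces

variable {V : Type*} [Fintype V] [DecidableEq V]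

lemma trace_aeval_X_sub_mul {R : Type*} [CommRing R] {M : Matrix V V R} {Q c τ : R} {n : ℕ}
    (h : HasDicksonTraces M Q c τ n) {i : ℕ} (hi : i < n) :
    (aeval M ((X - C (Q + 1)) * (X + C c) * dickson 2 Q i)).trace =
      if i = 0 then -(Q * τ) else 0 := by
  have hτ {j : ℕ} (hj : j ≤ n) := h.trace_aeval hj
  cases i with
  | zero =>
    have hexp : (X - C (Q + 1)) * (X + C c) * dickson 2 Q 0 =
        (X + C c) * dickson 2 Q 1 - C (Q + 1) * ((X + C c) * dickson 2 Q 0) := by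
      rw [dickson_two_kind_zero, dickson_one]
      ring
    rw [hexp, if_pos rfl, map_sub, ← smul_eq_C_mul, map_smul, Matrix.trace_sub, Matrix.trace_smul,
      hτ hi, hτ (Nat.zero_le n), smul_eq_mul]
    ring
  | succ i =>
    have hexp : (X - C (Q + 1)) * (X + C c) * dickson 2 Q (i + 1) =
        (X + C c) * dickson 2 Q (i + 2) - C (Q + 1) * ((X + C c) * dickson 2 Q (i + 1)) +
          C Q * ((X + C c) * dickson 2 Q i) := by
      rw [dickson_add_two]
      ring
    rw [hexp, if_neg i.succ_ne_zero, map_add, map_sub, ← smul_eq_C_mul, ← smul_eq_C_mul, map_smul,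
      map_smul, Matrix.trace_add, Matrix.trace_sub, Matrix.trace_smul, Matrix.trace_smul, hτ hi,
      hτ hi.le, hτ (Nat.le_of_succ_le hi.le), smul_eq_mul, smul_eq_mul]
    ring

lemma trace_aeval_mul_sum {R : Type*} [CommRing R] {M : Matrix V V R} {Q c τ : R} {n : ℕ}
    (h : HasDicksonTraces M Q c τ n) (hn : 0 < n) (a : ℕ → R) :
    (aeval M ((X - C (Q + 1)) * (X + C c) * ∑ i ∈ range n, C (a i) * dickson 2 Q i)).trace =
      -(a 0 * (Q * τ)) := by
  have hterm : ∀ i ∈ range n,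
      (aeval M ((X - C (Q + 1)) * (X + C c) * (C (a i) * dickson 2 Q i))).trace =
        if i = 0 then -(a i * (Q * τ)) else 0 := by
    intro i hi
    rw [mul_left_comm, ← smul_eq_C_mul, map_smul, Matrix.trace_smul,
      h.trace_aeval_X_sub_mul (mem_range.1 hi), smul_ite, smul_zero, smul_eq_mul, mul_neg]
  rw [mul_sum, map_sum, Matrix.trace_sum, sum_congr rfl hterm, sum_ite_eq',
    if_pos (mem_range.2 hn)]

variable {M : Matrix V V K} {Q c τ : K} {n : ℕ}

/-- The polynomial `(X - (Q + 1)) (X + c) ∑ Eᵢ(y) Eᵢ / Qⁱ` takes `M` to a multiple of the projection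
onto the `y`-eigenspace, by the Christoffel–Darboux identity. -/
theorem exists_nat_mul_sum_eq (h : HasDicksonTraces M Q c τ n) (hQ : Q ≠ 0) {y : K}
    (hy : (dickson 2 Q n).eval y = 0) :
    ∃ k : ℕ, Q * τ = k * ((Q + 1 - y) * (y + c) *
      ∑ i ∈ range n, (dickson 2 Q i).eval y ^ 2 / Q ^ i) := by
  set E := dickson 2 Q with hE
  set S := ∑ i ∈ range n, C ((E i).eval y / Q ^ i) * E i with hS
  set g := (X - C (Q + 1)) * (X + C c) with hg
  have annihilated : aeval M ((X - C y) * (g * S)) = 0 := by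
    have hCD := dickson_two_christoffel_darboux hQ y n
    rw [← hE, sum_range_succ, hy, zero_div, C_0, zero_mul, zero_mul, add_zero, ← hS] at hCD
    rw [show (X - C y) * (g * S) = g * E n * (-C (Q ^ n)⁻¹ * C ((E (n + 1)).eval y)) by
      linear_combination g * hCD, map_mul, h.aeval_eq_zero, zero_mul]
  have hn : 0 < n := by
    refine n.pos_of_ne_zero fun hn => one_ne_zero (α := K) ?_
    rw [← hy, hE, hn, dickson_two_kind_zero, eval_one]
  have trace_eq : (aeval M (g * S)).trace = -(Q * τ) := by
    rw [hS, h.trace_aeval_mul_sum hn fun i => (E i).eval y / Q ^ i, hE, dickson_two_kind_zero,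
      eval_one, pow_zero, div_one, one_mul]
  obtain ⟨k, hk⟩ := exists_nat_trace_aeval_eq annihilated
  have eval_S : S.eval y = ∑ i ∈ range n, (E i).eval y ^ 2 / Q ^ i := by
    rw [hS, eval_finsetSum]
    refine sum_congr rfl fun i _ => ?_
    rw [eval_mul, eval_C, sq, div_mul_eq_mul_div]
  refine ⟨k, ?_⟩
  rw [trace_eq, eval_mul, eval_S, hg, eval_mul, eval_sub, eval_add, eval_X, eval_C, eval_C] at hk
  linear_combination -hk

end HasDicksonTraces

end Dickson

section AdjacencyPolynomials

variable {V : Type*} [Fintype V] [DecidableEq V] {G : SimpleGraph V} [DecidableRel G.Adj]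

lemma nonBacktrackingSum_eq_aeval_dickson (R : Type*) [CommRing R] {s : ℕ}
    (h : G.IsRegularOfDegree (s + 1)) (i : ℕ) :
    nonBacktrackingSum R G i = aeval (G.adjMatrix R) (dickson 2 (s : R) i) := by
  have hdeg : G.degMatrix R - 1 = s := by
    rw [degMatrix, ← Matrix.diagonal_one, Matrix.diagonal_sub, ← Matrix.diagonal_natCast]
    congr 1
    funext u
    rw [h u, Nat.cast_succ, add_sub_cancel_right]
  induction i using Nat.twoStepInduction with
  | zero => rw [dickson_two_kind_zero, map_one, nonBacktrackingSum]
  | one => rw [dickson_one, aeval_X, nonBacktrackingSum]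
  | more i ih₀ ih₁ =>
    rw [nonBacktrackingSum_add_two, hdeg, ih₀, ih₁, dickson_add_two, map_sub, map_mul, map_mul,
      aeval_X, aeval_C, map_natCast]

namespace HasOrder

variable {s t : ℕ} (R : Type*) [CommRing R]

lemma nonBacktrackingSum_add_four (h : HasOrder G s t) (i : ℕ) :
    nonBacktrackingSum R G (i + 4) =
      (G.adjMatrix R ^ 2 - (↑(s + t) : Matrix V V R)) * nonBacktrackingSum R G (i + 2) -
        (↑(s * t) : Matrix V V R) * nonBacktrackingSum R G i := by
  rw [← h.sub_degMatrix_sub_one_mul R]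
  have hcomm := h.adjMatrix_mul_degMatrix_sub_one R
  set A := G.adjMatrix R
  set D := G.degMatrix R - 1
  set σ : Matrix V V R := ↑(s + t)
  set F := nonBacktrackingSum R G
  have hA : A * F (i + 1) = F (i + 2) + D * F i :=
    sub_eq_iff_eq_add.1 (nonBacktrackingSum_add_two R G i).symm
  calc F (i + 4) = A * (A * F (i + 2) - D * F (i + 1)) - D * F (i + 2) := rfl
    _ = A ^ 2 * F (i + 2) - A * D * F (i + 1) - D * F (i + 2) := by noncomm_ring
    _ = A ^ 2 * F (i + 2) - (σ - D) * (F (i + 2) + D * F i) - D * F (i + 2) := by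
      rw [hcomm, mul_assoc (σ - D), hA]
    _ = (A ^ 2 - σ) * F (i + 2) - (σ - D) * D * F i := by noncomm_ring

lemma nonBacktrackingSum_two_mul_add_one (h : HasOrder G s t) (i : ℕ) :
    nonBacktrackingSum R G (2 * i + 1) =
      aeval (G.adjMatrix R ^ 2 - (↑(s + t) : Matrix V V R)) (dickson 2 (↑(s * t) : R) i) *
        G.adjMatrix R := by
  induction i using Nat.twoStepInduction with
  | zero => rw [dickson_two_kind_zero, map_one, one_mul, mul_zero, zero_add, nonBacktrackingSum]
  | one =>
    have hcomm := h.adjMatrix_mul_degMatrix_sub_one R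
    set A := G.adjMatrix R
    set D := G.degMatrix R - 1
    set σ : Matrix V V R := ↑(s + t)
    rw [dickson_one, aeval_X]
    calc nonBacktrackingSum R G 3 = A * (A * A - D * 1) - D * A := rfl
      _ = A ^ 3 - A * D - D * A := by noncomm_ring
      _ = A ^ 3 - (σ - D) * A - D * A := by rw [hcomm]
      _ = (A ^ 2 - σ) * A := by noncomm_ring
  | more i ih₀ ih₁ =>
    rw [show 2 * (i + 2) + 1 = 2 * i + 1 + 4 by ring, h.nonBacktrackingSum_add_four R,
      show 2 * i + 1 + 2 = 2 * (i + 1) + 1 by ring, ih₀, ih₁, dickson_add_two, map_sub, map_mul,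
      map_mul, aeval_X, aeval_C, map_natCast, ← mul_assoc, ← mul_assoc, ← sub_mul]

end HasOrder

namespace IsGeneralizedPolygon

section Ring

variable {R : Type*} [Ring R] {m : ℕ}

lemma trace_nonBacktrackingSum (P : IsGeneralizedPolygon G m) {i : ℕ} (hi : i < m) :
    (nonBacktrackingSum R G i).trace = if Even i then (Fintype.card V : R) else 0 := by
  have hdiag (u : V) : nonBacktrackingSum R G i u u = if Even i then 1 else 0 := by
    rw [P.nonBacktrackingSum_apply hi, dist_self, zero_add]
    exact if_congr (and_iff_right i.zero_le) rfl rfl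
  simp only [Matrix.trace, Matrix.diag_apply, hdiag, sum_const, card_univ, smul_ite, nsmul_one,
    smul_zero]

lemma trace_adjMatrix_mul_nonBacktrackingSum (P : IsGeneralizedPolygon G m) {i : ℕ} (hi : i < m) :
    (G.adjMatrix R * nonBacktrackingSum R G i).trace =
      if Odd i then ∑ u, (G.degree u : R) else 0 := by
  have hdiag (u : V) : (G.adjMatrix R * nonBacktrackingSum R G i) u u =
      if Odd i then (G.degree u : R) else 0 := by
    have hnbr : ∀ w ∈ G.neighborFinset u, nonBacktrackingSum R G i w u =
        if Odd i then 1 else 0 := by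
      intro w hw
      rw [P.nonBacktrackingSum_apply hi,
        dist_eq_one_iff_adj.2 ((G.mem_neighborFinset u w).1 hw).symm]
      exact if_congr (by grind) rfl rfl
    rw [adjMatrix_mul_apply, sum_congr rfl hnbr, sum_const, card_neighborFinset_eq_degree, smul_ite,
      nsmul_one, smul_zero]
  simp only [Matrix.trace, Matrix.diag_apply, hdiag]
  rw [sum_ite_irrel, sum_const_zero]

variable {k s t : ℕ}

lemma adjMatrix_sq_mul_nonBacktrackingSum (P : IsGeneralizedPolygon G (k + 1))
    (h : HasOrder G s t) :
    G.adjMatrix R ^ 2 * nonBacktrackingSum R G k =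
      (↑((s + 1) * (t + 1)) : Matrix V V R) * nonBacktrackingSum R G k := by
  refine Matrix.ext fun u v => ?_
  have hadj {a b : V} (hb : b ∈ G.neighborFinset a) :
      nonBacktrackingSum R G k b v = 1 - nonBacktrackingSum R G k a v := by
    have hparity := even_dist_iff_not_of_adj P.connected P.colorable_two
      ((G.mem_neighborFinset a b).1 hb) v
    rw [P.nonBacktrackingSum_apply_of_succ, P.nonBacktrackingSum_apply_of_succ]
    split_ifs with hb ha <;> grind
  have hadj_adj : ∀ w ∈ G.neighborFinset u, (G.adjMatrix R * nonBacktrackingSum R G k) w v =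
      G.degree w * nonBacktrackingSum R G k u v := by
    intro w hw
    rw [adjMatrix_mul_apply, sum_congr rfl fun x hx => hadj hx, sum_const,
      card_neighborFinset_eq_degree, hadj hw, sub_sub_cancel, nsmul_eq_mul]
  rw [pow_two, mul_assoc, adjMatrix_mul_apply, sum_congr rfl hadj_adj, ← sum_mul, ← Nat.cast_sum,
    h.sum_degree_neighborFinset, ← Matrix.diagonal_natCast, Matrix.diagonal_mul]

end Ring

variable {R : Type*} [CommRing R] {n s t : ℕ}

theorem hasDicksonTraces_of_even (P : IsGeneralizedPolygon G (2 * (n + 1))) (h : HasOrder G s t) :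
    HasDicksonTraces (G.adjMatrix R ^ 2 - (↑(s + t) : Matrix V V R)) ↑(s * t) ↑(s + t)
      (∑ u, (G.degree u : R)) n where
  aeval_eq_zero := by
    have hk := P.adjMatrix_sq_mul_nonBacktrackingSum (R := R) (k := 2 * n + 1) h
    rw [h.nonBacktrackingSum_two_mul_add_one R] at hk
    set A := G.adjMatrix R
    set M : Matrix V V R := A ^ 2 - ↑(s + t)
    set E := aeval M (dickson 2 (↑(s * t) : R) n)
    have hQ : aeval M (X - C (↑(s * t) + 1 : R)) = A ^ 2 - ↑((s + 1) * (t + 1)) := by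
      rw [map_sub, aeval_X, aeval_C, map_add, map_natCast, map_one, sub_sub,
        ← Nat.cast_one, ← Nat.cast_add, ← Nat.cast_add]
      congr 2
      ring
    have hc : aeval M (X + C (↑(s + t) : R)) = A ^ 2 := by
      rw [map_add, aeval_X, aeval_C, map_natCast, sub_add_cancel]
    rw [mul_assoc, mul_comm (X + _), map_mul, map_mul, hQ, hc]
    calc (A ^ 2 - ↑((s + 1) * (t + 1))) * (E * A ^ 2) =
          (A ^ 2 * (E * A) - ↑((s + 1) * (t + 1)) * (E * A)) * A := by noncomm_ring
      _ = 0 := by rw [hk, sub_self, zero_mul]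
  trace_aeval {i} hi := by
    rw [mul_comm, map_mul, map_add, aeval_X, aeval_C, map_natCast, sub_add_cancel,
      pow_two (G.adjMatrix R), ← mul_assoc, ← pow_two,
      ← h.nonBacktrackingSum_two_mul_add_one R, Matrix.trace_mul_comm,
      P.trace_adjMatrix_mul_nonBacktrackingSum (by omega), if_pos (odd_two_mul_add_one i)]

theorem hasDicksonTraces_of_hasOrder_self (P : IsGeneralizedPolygon G (n + 1))
    (h : HasOrder G s s) :
    HasDicksonTraces (G.adjMatrix R) (s : R) (s + 1) ((s + 1) * Fintype.card V) n where
  aeval_eq_zero := by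
    have hk := P.adjMatrix_sq_mul_nonBacktrackingSum (R := R) h
    rw [nonBacktrackingSum_eq_aeval_dickson R h.isRegularOfDegree] at hk
    have hQ : aeval (G.adjMatrix R) ((X - C (s + 1 : R)) * (X + C (s + 1 : R))) =
        G.adjMatrix R ^ 2 - ↑((s + 1) * (s + 1)) := by
      rw [← Nat.cast_succ, map_mul, map_sub, map_add, aeval_X, aeval_C, map_natCast, Nat.cast_mul,
        pow_two, (Nat.commute_cast _ _).mul_self_sub_mul_self_eq']
    rw [map_mul, hQ, sub_mul, hk, sub_self]
  trace_aeval {i} hi := by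
    have hdeg (u : V) : (G.degree u : R) = s + 1 := by
      rw [h.isRegularOfDegree u, Nat.cast_succ]
    have htr := P.trace_nonBacktrackingSum (R := R) (i := i) (by omega)
    have htrA := P.trace_adjMatrix_mul_nonBacktrackingSum (R := R) (i := i) (by omega)
    rw [nonBacktrackingSum_eq_aeval_dickson R h.isRegularOfDegree] at htr htrA
    rw [add_mul, map_add, ← smul_eq_C_mul, map_smul, map_mul, aeval_X, Matrix.trace_add,
      Matrix.trace_smul, htr, htrA]
    simp only [hdeg, sum_const, card_univ, nsmul_eq_mul, smul_eq_mul]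
    obtain hi | hi := i.even_or_odd
    · rw [if_neg (Nat.not_odd_iff_even.2 hi), if_pos hi, zero_add]
    · rw [if_pos hi, if_neg (Nat.not_even_iff_odd.2 hi), mul_zero, add_zero, mul_comm]

end IsGeneralizedPolygon

end AdjacencyPolynomials

section Angles

open Real

lemma dickson_two_eval_two_mul_cos (r θ : ℝ) (n : ℕ) :
    (dickson 2 (r ^ 2) n).eval (2 * r * cos θ) * sin θ = r ^ n * sin ((n + 1) * θ) := by
  induction n using Nat.twoStepInduction with
  | zero => rw [dickson_two_kind_zero, eval_one, Nat.cast_zero, zero_add, pow_zero, one_mul,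
    one_mul, one_mul]
  | one =>
    rw [dickson_one, eval_X, Nat.cast_one, one_add_one_eq_two, sin_two_mul]
    ring
  | more n ih₀ ih₁ =>
    have hsin : sin ((n + 3) * θ) = 2 * cos θ * sin ((n + 2) * θ) - sin ((n + 1) * θ) := by
      rw [show (n + 3) * θ = (n + 2) * θ + θ by ring, show (n + 1) * θ = (n + 2) * θ - θ by ring,
        sin_add, sin_sub]
      ring
    push_cast at ih₁ ⊢
    rw [add_assoc, one_add_one_eq_two] at ih₁
    rw [dickson_add_two, eval_sub, eval_mul, eval_mul, eval_X, eval_C, add_assoc,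
      two_add_one_eq_three, hsin]
    linear_combination 2 * r * cos θ * ih₁ - r ^ 2 * ih₀

lemma two_mul_sin_mul_sum_sin_sq (θ : ℝ) (n : ℕ) :
    2 * sin θ * ∑ i ∈ range n, sin ((i + 1) * θ) ^ 2 =
      (n + 1) * sin θ - cos (n * θ) * sin ((n + 1) * θ) := by
  induction n with
  | zero => simp
  | succ n ih =>
    have hsin : sin ((n + 1 + 1) * θ) = sin ((n + 1) * θ) * cos θ + cos ((n + 1) * θ) * sin θ := by
      rw [add_one_mul, sin_add]
    have hcos : cos (n * θ) = cos ((n + 1) * θ) * cos θ + sin ((n + 1) * θ) * sin θ := by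
      rw [← cos_sub]
      ring_nf
    rw [sum_range_succ, mul_add, ih]
    push_cast
    rw [hsin, hcos]
    linear_combination sin θ * sin_sq_add_cos_sq ((n + 1) * θ)

variable {r θ : ℝ} {n : ℕ}

lemma dickson_two_eval_two_mul_cos_eq_zero (hθ : sin θ ≠ 0) (hnθ : sin ((n + 1) * θ) = 0) :
    (dickson 2 (r ^ 2) n).eval (2 * r * cos θ) = 0 := by
  have heval := dickson_two_eval_two_mul_cos r θ n
  rwa [hnθ, mul_zero, mul_eq_zero_iff_right hθ] at heval

lemma sum_dickson_two_eval_sq_div_pow (hr : r ≠ 0) (hθ : sin θ ≠ 0)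
    (hnθ : sin ((n + 1) * θ) = 0) :
    ∑ i ∈ range n, (dickson 2 (r ^ 2) i).eval (2 * r * cos θ) ^ 2 / (r ^ 2) ^ i =
      (n + 1) / (2 * sin θ ^ 2) := by
  have hterm (i : ℕ) : (dickson 2 (r ^ 2) i).eval (2 * r * cos θ) ^ 2 / (r ^ 2) ^ i =
      sin ((i + 1) * θ) ^ 2 / sin θ ^ 2 := by
    rw [div_eq_div_iff (by positivity) (by positivity), ← mul_pow, dickson_two_eval_two_mul_cos,
      mul_pow, ← pow_mul, ← pow_mul, mul_comm 2, mul_comm]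
  have hsum := two_mul_sin_mul_sum_sin_sq θ n
  rw [hnθ, mul_zero, sub_zero] at hsum
  rw [sum_congr rfl fun i _ => hterm i, ← sum_div, div_eq_div_iff (by positivity) (by positivity)]
  linear_combination sin θ * hsum

lemma four_mul_sq_sub_two_mul_cos_sq (r θ : ℝ) :
    4 * r ^ 2 - (2 * r * cos θ) ^ 2 = 4 * r ^ 2 * sin θ ^ 2 := by
  rw [sin_sq]
  ring

lemma four_mul_sq_sub_two_mul_cos_sq_ne_zero (hr : r ≠ 0) (hθ : sin θ ≠ 0) :
    4 * r ^ 2 - (2 * r * cos θ) ^ 2 ≠ 0 := by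
  rw [four_mul_sq_sub_two_mul_cos_sq]
  positivity

end Angles

section Rationality

variable {F : Type*} [Field F] {K : Subfield F} {Q c y : F}

lemma sq_mem_of_ratio_mem (h2 : (2 : F) ≠ 0) (hQ : Q ∈ K) (hc : c ∈ K) (hQc : (Q + 1) * c ≠ 4 * Q)
    (hy : 4 * Q - y ^ 2 ≠ 0) (hpos : (Q + 1 - y) * (y + c) / (4 * Q - y ^ 2) ∈ K)
    (hneg : (Q + 1 + y) * (-y + c) / (4 * Q - y ^ 2) ∈ K) : y ^ 2 ∈ K := by
  have hsum : (Q + 1 - y) * (y + c) / (4 * Q - y ^ 2) + (Q + 1 + y) * (-y + c) / (4 * Q - y ^ 2) -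
      2 = 2 * ((Q + 1) * c - 4 * Q) / (4 * Q - y ^ 2) := by
    rw [← add_div, div_sub' hy]
    ring
  have hnum : 2 * ((Q + 1) * c - 4 * Q) ∈ K :=
    K.mul_mem (ofNat_mem K 2) (K.sub_mem (K.mul_mem (K.add_mem hQ K.one_mem) hc)
      (K.mul_mem (ofNat_mem K 4) hQ))
  have hD : 4 * Q - y ^ 2 ∈ K := by
    rw [← div_div_cancel₀ (mul_ne_zero h2 (sub_ne_zero.2 hQc)) (b := 4 * Q - y ^ 2), ← hsum]
    exact K.div_mem hnum (K.sub_mem (K.add_mem hpos hneg) (ofNat_mem K 2))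
  simpa using K.sub_mem (K.mul_mem (ofNat_mem K 4) hQ) hD

lemma mem_of_ratio_mem (h2 : (2 : F) ≠ 0) (hQ : Q ∈ K) (hc : c ∈ K) (hQc : Q + 1 ≠ c)
    (hy : 4 * Q - y ^ 2 ≠ 0) (hsq : y ^ 2 ∈ K)
    (hpos : (Q + 1 - y) * (y + c) / (4 * Q - y ^ 2) ∈ K)
    (hneg : (Q + 1 + y) * (-y + c) / (4 * Q - y ^ 2) ∈ K) : y ∈ K := by
  have hdiff : ((Q + 1 - y) * (y + c) / (4 * Q - y ^ 2) -
      (Q + 1 + y) * (-y + c) / (4 * Q - y ^ 2)) * (4 * Q - y ^ 2) / (2 * (Q + 1 - c)) = y := by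
    rw [← sub_div, div_mul_cancel₀ _ hy, div_eq_iff (mul_ne_zero h2 (sub_ne_zero.2 hQc))]
    ring
  rw [← hdiff]
  exact K.div_mem
    (K.mul_mem (K.sub_mem hpos hneg) (K.sub_mem (K.mul_mem (ofNat_mem K 4) hQ) hsq))
    (K.mul_mem (ofNat_mem K 2) (K.sub_mem (K.add_mem hQ K.one_mem) hc))

end Rationality

section Niven

open Real

lemma mem_of_cos_two_pi_div_rational {n : ℕ} (h : ∃ q : ℚ, cos (2 * π / (n + 1)) = q) :
    n ∈ ({0, 1, 2, 3, 5} : Set ℕ) := by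
  obtain rfl | hn := n.eq_zero_or_pos
  · exact Set.mem_insert 0 _
  have hn₀ : (n + 1 : ℚ) ≠ 0 := by positivity
  have hle : 2 / (n + 1 : ℚ) ≤ 1 := by
    rw [div_le_one (by positivity)]
    exact_mod_cast Nat.succ_le_succ hn
  have hniven := niven_angle_div_pi_eq (r := 2 / (n + 1))
    (by convert h using 4; push_cast; ring) ⟨by positivity, hle⟩
  simp only [Set.mem_insert_iff, Set.mem_singleton_iff, div_eq_iff hn₀] at hniven ⊢
  field_simp at hniven
  norm_cast at hniven
  omega

end Niven

namespace HasDicksonTraces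

open Real

variable {V : Type*} [Fintype V] [DecidableEq V] {K : Subfield ℝ} {M : Matrix V V ℝ}
  {r c τ θ : ℝ} {n : ℕ}

lemma ratio_mem (h : HasDicksonTraces M (r ^ 2) c τ n) (hr : r ≠ 0) (hτ : τ ∈ K) (hτ₀ : τ ≠ 0)
    (hθ : sin θ ≠ 0) (hnθ : sin ((n + 1) * θ) = 0) :
    (r ^ 2 + 1 - 2 * r * cos θ) * (2 * r * cos θ + c) / (4 * r ^ 2 - (2 * r * cos θ) ^ 2) ∈ K := by
  obtain ⟨k, hk⟩ := h.exists_nat_mul_sum_eq (pow_ne_zero 2 hr)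
    (dickson_two_eval_two_mul_cos_eq_zero hθ hnθ)
  have hk₀ : (k : ℝ) ≠ 0 := fun hk₀ =>
    mul_ne_zero (pow_ne_zero 2 hr) hτ₀ (by rw [hk, hk₀, zero_mul])
  have hratio : (r ^ 2 + 1 - 2 * r * cos θ) * (2 * r * cos θ + c) / (4 * r ^ 2 * sin θ ^ 2) =
      τ / (2 * (n + 1) * k) := by
    rw [sum_dickson_two_eval_sq_div_pow hr hθ hnθ] at hk
    field_simp at hk ⊢
    linear_combination -2 * hk
  rw [four_mul_sq_sub_two_mul_cos_sq, hratio]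
  exact K.div_mem hτ (K.mul_mem
    (K.mul_mem (ofNat_mem K 2) (K.add_mem (natCast_mem K n) K.one_mem)) (natCast_mem K k))

lemma neg_ratio_mem (h : HasDicksonTraces M (r ^ 2) c τ n) (hr : r ≠ 0) (hτ : τ ∈ K) (hτ₀ : τ ≠ 0)
    (hθ : sin θ ≠ 0) (hnθ : sin ((n + 1) * θ) = 0) :
    (r ^ 2 + 1 + 2 * r * cos θ) * (-(2 * r * cos θ) + c) / (4 * r ^ 2 - (2 * r * cos θ) ^ 2) ∈
      K := by
  have hsupp : sin ((n + 1) * (π - θ)) = 0 := by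
    have hπ : sin ((n + 1) * π) = 0 := by exact_mod_cast sin_nat_mul_pi (n + 1)
    rw [mul_sub, sin_sub, hπ, hnθ, zero_mul, mul_zero, sub_zero]
  have hratio := h.ratio_mem hr hτ hτ₀ (θ := π - θ) (by rwa [sin_pi_sub]) hsupp
  rwa [cos_pi_sub, mul_neg, sub_neg_eq_add, neg_sq] at hratio

lemma two_mul_cos_sq_mem (h : HasDicksonTraces M (r ^ 2) c τ n) (hr : r ≠ 0) (hQ : r ^ 2 ∈ K)
    (hc : c ∈ K) (hτ : τ ∈ K) (hτ₀ : τ ≠ 0) (hQc : (r ^ 2 + 1) * c ≠ 4 * r ^ 2)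
    (hθ : sin θ ≠ 0) (hnθ : sin ((n + 1) * θ) = 0) : (2 * r * cos θ) ^ 2 ∈ K :=
  sq_mem_of_ratio_mem two_ne_zero hQ hc hQc (four_mul_sq_sub_two_mul_cos_sq_ne_zero hr hθ)
    (h.ratio_mem hr hτ hτ₀ hθ hnθ) (h.neg_ratio_mem hr hτ hτ₀ hθ hnθ)

lemma two_mul_cos_mem (h : HasDicksonTraces M (r ^ 2) c τ n) (hr : r ≠ 0) (hQ : r ^ 2 ∈ K)
    (hc : c ∈ K) (hτ : τ ∈ K) (hτ₀ : τ ≠ 0) (hQc : (r ^ 2 + 1) * c ≠ 4 * r ^ 2)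
    (hQc' : r ^ 2 + 1 ≠ c) (hθ : sin θ ≠ 0) (hnθ : sin ((n + 1) * θ) = 0) : 2 * r * cos θ ∈ K :=
  mem_of_ratio_mem two_ne_zero hQ hc hQc' (four_mul_sq_sub_two_mul_cos_sq_ne_zero hr hθ)
    (h.two_mul_cos_sq_mem hr hQ hc hτ hτ₀ hQc hθ hnθ) (h.ratio_mem hr hτ hτ₀ hθ hnθ)
    (h.neg_ratio_mem hr hτ hτ₀ hθ hnθ)

variable {Q c τ : ℚ}

theorem mem_of_rational (h : HasDicksonTraces M (Q : ℝ) c τ n) (hQ : 0 < Q) (hτ : τ ≠ 0)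
    (hQc : (Q + 1) * c ≠ 4 * Q) : n ∈ ({0, 1, 2, 3, 5} : Set ℕ) := by
  obtain rfl | hn := n.eq_zero_or_pos
  · exact Set.mem_insert 0 _
  set θ := π / (n + 1) with hθ
  have hpos : 0 < (n + 1 : ℝ) := by positivity
  have hsin : 0 < sin θ := by
    refine sin_pos_of_pos_of_lt_pi (by positivity) (div_lt_self pi_pos ?_)
    exact_mod_cast Nat.succ_lt_succ hn
  have hnθ : sin ((n + 1) * θ) = 0 := by rw [hθ, mul_div_cancel₀ _ hpos.ne', sin_pi]
  obtain ⟨r, hr₀, hr⟩ : ∃ r : ℝ, r ≠ 0 ∧ r ^ 2 = Q :=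
    ⟨√Q, by positivity, sq_sqrt (by exact_mod_cast hQ.le)⟩
  rw [← hr] at h
  obtain ⟨q, hq⟩ := h.two_mul_cos_sq_mem (K := (Rat.castHom ℝ).fieldRange) hr₀
    (hr ▸ ⟨Q, rfl⟩) ⟨c, rfl⟩ ⟨τ, rfl⟩ (by exact_mod_cast hτ) (by rw [hr]; exact_mod_cast hQc)
    hsin.ne' hnθ
  refine mem_of_cos_two_pi_div_rational ⟨q / (2 * Q) - 1, ?_⟩
  rw [Rat.coe_castHom, mul_pow, mul_pow, hr] at hq
  have hQ₀ : (Q : ℝ) ≠ 0 := by exact_mod_cast hQ.ne'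
  rw [mul_div_assoc, ← hθ, cos_two_mul]
  push_cast
  rw [hq]
  field_simp

theorem ne_five_of_rational (h : HasDicksonTraces M (Q : ℝ) c τ n) (hQ : 0 < Q) (hτ : τ ≠ 0)
    (hQc : (Q + 1) * c ≠ 4 * Q) (hQc' : Q + 1 ≠ c) : n ≠ 5 := by
  rintro rfl
  obtain ⟨r, hr₀, hr⟩ : ∃ r : ℝ, r ≠ 0 ∧ r ^ 2 = Q :=
    ⟨√Q, by positivity, sq_sqrt (by exact_mod_cast hQ.le)⟩
  rw [← hr] at h
  have mem {θ : ℝ} := h.two_mul_cos_mem (K := (Rat.castHom ℝ).fieldRange) (θ := θ) hr₀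
    (hr ▸ ⟨Q, rfl⟩) ⟨c, rfl⟩ ⟨τ, rfl⟩ (by exact_mod_cast hτ) (by rw [hr]; exact_mod_cast hQc)
    (by rw [hr]; exact_mod_cast hQc')
  obtain ⟨a, ha⟩ := mem (θ := π / 6) (by rw [sin_pi_div_six]; norm_num)
    (by rw [show ((5 : ℕ) + 1) * (π / 6) = π by push_cast; ring, sin_pi])
  obtain ⟨b, hb⟩ := mem (θ := π / 3) (by rw [sin_pi_div_three]; positivity)
    (by rw [show ((5 : ℕ) + 1) * (π / 3) = 2 * π by push_cast; ring, sin_two_pi])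
  rw [cos_pi_div_six] at ha
  rw [cos_pi_div_three] at hb
  refine Nat.prime_three.irrational_sqrt ⟨a / b, ?_⟩
  rw [Rat.coe_castHom] at ha hb
  push_cast
  rw [ha, hb]
  field_simp

end HasDicksonTraces

namespace IsGeneralizedPolygon

variable {V : Type*} [Fintype V] {G : SimpleGraph V} [DecidableRel G.Adj] {n s t : ℕ}

theorem mem_of_hasOrder_of_even (P : IsGeneralizedPolygon G (2 * (n + 1))) (h : HasOrder G s t)
    (hs : 2 ≤ s) (ht : 2 ≤ t) : n ∈ ({0, 1, 2, 3} : Set ℕ) := by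
  classical
  have traces : HasDicksonTraces (G.adjMatrix ℝ ^ 2 - (↑(s + t) : Matrix V V ℝ))
      ((s * t : ℚ) : ℝ) ((s + t : ℚ) : ℝ) ((∑ u, (G.degree u : ℚ) : ℚ) : ℝ) n := by
    have traces := P.hasDicksonTraces_of_even (R := ℝ) h
    push_cast at traces ⊢
    exact traces
  have hτ : ∑ u, (G.degree u : ℚ) ≠ 0 := by
    have := P.connected.nonempty
    refine (sum_pos (fun u _ => ?_) univ_nonempty).ne'
    obtain hu | hu := h.degree_eq u <;>
    · rw [hu]
      positivity
  have hs' : (2 : ℚ) ≤ s := by exact_mod_cast hs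
  have ht' : (2 : ℚ) ≤ t := by exact_mod_cast ht
  have hQ : (0 : ℚ) < s * t := by positivity
  have hQc : (s * t + 1 : ℚ) * (s + t) ≠ 4 * (s * t) := by nlinarith
  have hQc' : (s * t + 1 : ℚ) ≠ s + t := by nlinarith
  have hmem := traces.mem_of_rational hQ hτ hQc
  have hne := traces.ne_five_of_rational hQ hτ hQc hQc'
  simp only [Set.mem_insert_iff, Set.mem_singleton_iff] at hmem ⊢
  omega

theorem mem_of_hasOrder_self (P : IsGeneralizedPolygon G (n + 1)) (h : HasOrder G s s)
    (hs : 2 ≤ s) : n ∈ ({0, 1, 2, 3, 5} : Set ℕ) := by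
  classical
  have traces : HasDicksonTraces (G.adjMatrix ℝ) ((s : ℚ) : ℝ) ((s + 1 : ℚ) : ℝ)
      (((s + 1) * Fintype.card V : ℚ) : ℝ) n := by
    have traces := P.hasDicksonTraces_of_hasOrder_self (R := ℝ) h
    push_cast at traces ⊢
    exact traces
  have := P.connected.nonempty
  have hs' : (2 : ℚ) ≤ s := by exact_mod_cast hs
  refine traces.mem_of_rational (by positivity) (by positivity) ?_
  nlinarith

end IsGeneralizedPolygon

/-- **Feit–Higman theorem.** A finite, thick generalised `m`-gon (a finite connected
bipartite simple graph of diameter `m` and girth `2m`, in which every vertex has degree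
at least 3) exists only for `m ∈ {2, 3, 4, 6, 8}`. -/
theorem feit_higman {V : Type} [Fintype V] (G : SimpleGraph V) [DecidableRel G.Adj]
    (hconn : G.Connected) (hbip : G.Colorable 2)
    (hthick : ∀ v : V, 3 ≤ G.degree v)
    (m : ℕ) (hm : 2 ≤ m) (hdiam : G.diam = m) (hgirth : G.girth = 2 * m) :
    m ∈ ({2, 3, 4, 6, 8} : Set ℕ) := by
  have P : IsGeneralizedPolygon G m := ⟨hconn, hbip, hm, hdiam, hgirth⟩
  obtain ⟨s, t, hs, ht, order⟩ := exists_hasOrder_of_connected hconn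
    (fun _ _ _ => P.degree_eq_of_adj_of_adj hthick) hthick
  obtain ⟨k, rfl | rfl⟩ := m.even_or_odd'
  · obtain ⟨n, rfl⟩ := Nat.exists_eq_add_of_le' (Nat.pos_of_mul_pos_left (zero_lt_two.trans_le hm))
    have hn := P.mem_of_hasOrder_of_even order hs ht
    simp only [Set.mem_insert_iff, Set.mem_singleton_iff] at hn ⊢
    omega
  · obtain rfl := order.eq_of_isGeneralizedPolygon_of_odd P (odd_two_mul_add_one k)
    have hk := P.mem_of_hasOrder_self order hs
    simp only [Set.mem_insert_iff, Set.mem_singleton_iff] at hk ⊢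
    omega
end

section
/- Let Γ be a finitely generated group and suppose there exists a field F, a natural number n, and an injective group homomorphism Γ → GL(n, F). Then Γ is residually finite: for every γ ∈ Γ with γ ≠ 1 there exists a finite group Q and a group homomorphism φ : Γ → Q with φ(γ) ≠ 1. -/
/-!
The entries of the matrices `ρ g` and `(ρ g)⁻¹`, for `g` in a finite generating set of `Γ`, generate
a finitely generated ring `A`, and `ρ` takes values in `GL n A`. Finitely generated commutative
rings are residually finite: by the Nullstellensatz over `ℤ` their residue fields are finite, hence
so are the quotients by powers of maximal ideals, and by Krull's intersection theorem no nonzero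
element lies in all of these powers. Reducing matrix entries modulo such a power separates a given
nontrivial element of `GL n A` from the identity in a finite group.
-/

theorem isJacobsonRing_of_dimensionLEOne {R : Type*} [CommRing R] [Ring.DimensionLEOne R]
    (h : (⊥ : Ideal R).jacobson = ⊥) : IsJacobsonRing R := by
  refine isJacobsonRing_iff_prime_eq.mpr fun P hP => ?_
  obtain rfl | hP_bot := eq_or_ne P ⊥
  · exact h
  · have := hP.isMaximal hP_bot
    exact Ideal.jacobson_eq_self_of_isMaximal

theorem int_jacobson_bot : (⊥ : Ideal ℤ).jacobson = ⊥ := by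
  refine eq_bot_iff.mpr fun x hx => Ideal.mem_bot.mpr ?_
  have hunit : IsUnit (x * x + 1) := Ideal.mem_jacobson_bot.mp hx x
  rcases Int.isUnit_iff.mp hunit with h | h
  · exact mul_self_eq_zero.mp (by lia)
  · nlinarith [mul_self_nonneg x]

instance isJacobsonRing_int : IsJacobsonRing ℤ :=
  isJacobsonRing_of_dimensionLEOne int_jacobson_bot

theorem finite_quotient_of_isMaximal_of_finiteType {R A : Type*} [CommRing R]
    [Ring.HasFiniteQuotients R] [IsJacobsonRing R] (hR : ¬IsField R) [CommRing A] [Algebra R A]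
    [Algebra.FiniteType R A] (m : Ideal A) [m.IsMaximal] : Finite (A ⧸ m) := by
  let _ : Field (A ⧸ m) := Ideal.Quotient.field m
  have : Module.Finite R (A ⧸ m) := finite_of_finite_type_of_isJacobsonRing R (A ⧸ m)
  have hm : m.under R ≠ ⊥ := fun h => by
    have hinj : Function.Injective (algebraMap R (A ⧸ m)) :=
      (injective_iff_map_eq_zero _).mpr fun r hr =>
        Ideal.mem_bot.mp (h ▸ Ideal.mem_comap.mpr (Ideal.Quotient.eq_zero_iff_mem.mp hr))
    exact hR (isField_of_isIntegral_of_isField hinj (Field.toIsField _))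
  have : Finite (R ⧸ m.under R) := Ring.HasFiniteQuotients.finiteQuotient hm
  have : Module.Finite (R ⧸ m.under R) (A ⧸ m) := .of_restrictScalars_finite R _ _
  exact Module.finite_of_finite (R ⧸ m.under R)

theorem exists_isMaximal_notMem_pow {A : Type*} [CommRing A] [IsNoetherianRing A] {x : A}
    (hx : x ≠ 0) : ∃ m : Ideal A, m.IsMaximal ∧ ∃ k : ℕ, x ∉ m ^ k := by
  have hann : Ideal.torsionOf A A x ≠ ⊤ := by simpa [Ideal.torsionOf_eq_top_iff]
  -- For `m` containing the annihilator of `x`, Krull's theorem rules out `x ∈ ⋂ k, m ^ k`: it would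
  -- give `r ∈ m` with `(1 - r) x = 0`, so that `1 - r ∈ m`.
  obtain ⟨m, hm, hann_le⟩ := Ideal.exists_le_maximal _ hann
  refine ⟨m, hm, ?_⟩
  by_contra! hx_mem
  obtain ⟨r, hr⟩ : ∃ r : m, (r : A) • x = x :=
    (m.mem_iInf_smul_pow_eq_bot_iff x).mp (by simpa using hx_mem)
  have h1r : 1 - (r : A) ∈ m := hann_le (by
    rw [Ideal.mem_torsionOf_iff, sub_smul, one_smul, hr, sub_self])
  exact hm.ne_top ((Ideal.eq_top_iff_one m).mpr (by simpa using add_mem h1r r.2))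

/-- A commutative ring is residually finite if its nonzero elements are detected by its finite
quotient rings; this is the property of the coefficient ring that makes `GL n` residually finite. -/
def IsResiduallyFiniteRing (A : Type*) [CommRing A] : Prop :=
  ∀ x : A, x ≠ 0 → ∃ I : Ideal A, Finite (A ⧸ I) ∧ x ∉ I

theorem isResiduallyFiniteRing_of_forall_finite_quotient {A : Type*} [CommRing A]
    [IsNoetherianRing A] (hA : ∀ m : Ideal A, m.IsMaximal → Finite (A ⧸ m)) :
    IsResiduallyFiniteRing A := by
  intro x hx
  obtain ⟨m, hm, k, hxk⟩ := exists_isMaximal_notMem_pow hx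
  have := hA m hm
  exact ⟨m ^ k, Ideal.finite_quotient_pow (IsNoetherian.noetherian m) k, hxk⟩

theorem isResiduallyFiniteRing_of_finiteType_int (A : Type*) [CommRing A]
    [Algebra.FiniteType ℤ A] : IsResiduallyFiniteRing A := by
  have : IsNoetherianRing A := Algebra.FiniteType.isNoetherianRing ℤ A
  exact isResiduallyFiniteRing_of_forall_finite_quotient fun m _ =>
    finite_quotient_of_isMaximal_of_finiteType Int.not_isField m

theorem residuallyFinite_of_injective {G H : Type*} [Group G] [Group H] [Group.ResiduallyFinite H]
    (f : G →* H) (hf : Function.Injective f) : Group.ResiduallyFinite G :=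
  Group.residuallyFinite_iff_forall_finiteIndexNormalSubgroup.mpr fun g hg =>
    (map_eq_one_iff f hf).mp <|
      Group.eq_one_iff_forall_finiteIndexNormalSubroup (f g) fun K => hg (K.comap f)

theorem exists_finite_monoidHom_ne_one.{u} {G : Type u} [Group G] [Group.ResiduallyFinite G]
    {g : G} (hg : g ≠ 1) : ∃ (Q : Type u) (_ : Group Q) (_ : Finite Q) (φ : G →* Q), φ g ≠ 1 := by
  obtain ⟨H, hH⟩ := Group.exists_finiteIndexNormalSubgroup_notMem g hg
  exact ⟨G ⧸ H.toSubgroup, inferInstance, inferInstance, QuotientGroup.mk' H.toSubgroup,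
    (QuotientGroup.eq_one_iff g).not.mpr hH⟩

section GeneralLinearGroup

open Matrix

variable {n : Type*} [Fintype n] [DecidableEq n]

theorem generalLinearGroup_map_injective {R S : Type*} [CommRing R] [CommRing S] {f : R →+* S}
    (hf : Function.Injective f) :
    Function.Injective (GeneralLinearGroup.map f : GL n R →* GL n S) :=
  Units.map_injective (Matrix.map_injective hf)

theorem IsResiduallyFiniteRing.residuallyFinite_generalLinearGroup {A : Type*} [CommRing A]
    (hA : IsResiduallyFiniteRing A) : Group.ResiduallyFinite (GL n A) := by
  refine Group.residuallyFinite_of_forall_exists_finite_monoidHom fun g hg => ?_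
  obtain ⟨i, j, hij⟩ : ∃ i j, g i j ≠ (1 : GL n A) i j := by
    by_contra! h
    exact hg (GeneralLinearGroup.ext h)
  obtain ⟨I, hI, hgI⟩ := hA _ (sub_ne_zero.mpr hij)
  refine ⟨GL n (A ⧸ I), inferInstance, inferInstance, GeneralLinearGroup.map (Ideal.Quotient.mk I),
    fun h => hgI (Ideal.Quotient.eq.mp ?_)⟩
  rw [← GeneralLinearGroup.map_apply, ← GeneralLinearGroup.map_apply, h, map_one]

variable {k R : Type*} [CommRing k] [CommRing R] [Algebra k R]

theorem mem_range_map_algebraMap (A : Subalgebra k R) {g : GL n R} (hg : ∀ i j, g i j ∈ A)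
    (hg_inv : ∀ i j, g⁻¹ i j ∈ A) :
    g ∈ (GeneralLinearGroup.map (n := n) (algebraMap A R)).range := by
  have hinj : Function.Injective ((algebraMap A R).mapMatrix : Matrix n n A →+* Matrix n n R) :=
    Matrix.map_injective Subtype.val_injective
  refine ⟨⟨.of fun i j => ⟨g i j, hg i j⟩, .of fun i j => ⟨g⁻¹ i j, hg_inv i j⟩,
    hinj ?_, hinj ?_⟩, rfl⟩
  · rw [map_mul, map_one]
    exact g.mul_inv
  · rw [map_mul, map_one]
    exact g.inv_mul

variable (k) in
theorem exists_fg_subalgebra_le_range_map {H : Subgroup (GL n R)} (hH : H.FG) :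
    ∃ A : Subalgebra k R, A.FG ∧
      H ≤ (GeneralLinearGroup.map (n := n) (algebraMap A R)).range := by
  obtain ⟨S, rfl⟩ := hH
  let E : Set R := ⋃ g ∈ S, Set.range (fun p : n × n => g p.1 p.2) ∪
    Set.range (fun p : n × n => g⁻¹ p.1 p.2)
  have hE : E.Finite := S.finite_toSet.biUnion fun g _ =>
    (Set.finite_range _).union (Set.finite_range _)
  refine ⟨Algebra.adjoin k E, Subalgebra.fg_def.mpr ⟨E, hE, rfl⟩,
    (Subgroup.closure_le _).mpr fun g hg => mem_range_map_algebraMap _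
      (fun i j => ?_) fun i j => ?_⟩
  · exact Algebra.subset_adjoin (Set.mem_biUnion hg (.inl ⟨(i, j), rfl⟩))
  · exact Algebra.subset_adjoin (Set.mem_biUnion hg (.inr ⟨(i, j), rfl⟩))

end GeneralLinearGroup

theorem malcev_linear_residually_finite_general {Γ n R : Type*} [Group Γ] [Group.FG Γ]
    [Fintype n] [DecidableEq n] [CommRing R] (ρ : Γ →* Matrix.GeneralLinearGroup n R)
    (hρ : Function.Injective ρ) :
    Group.ResiduallyFinite Γ := by
  obtain ⟨A, hA_fg, hρA⟩ :=
    exists_fg_subalgebra_le_range_map ℤ ((Group.fg_iff_subgroup_fg ρ.range).mp inferInstance)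
  have : Algebra.FiniteType ℤ A := A.fg_iff_finiteType.mp hA_fg
  have : Group.ResiduallyFinite (Matrix.GeneralLinearGroup n A) :=
    (isResiduallyFiniteRing_of_finiteType_int A).residuallyFinite_generalLinearGroup
  let e := MonoidHom.ofInjective
    (generalLinearGroup_map_injective (n := n) (f := algebraMap A R) Subtype.val_injective)
  exact residuallyFinite_of_injective
    (e.symm.toMonoidHom.comp ((Subgroup.inclusion hρA).comp ρ.rangeRestrict))
    (e.symm.injective.comp
      ((Subgroup.inclusion_injective hρA).comp (ρ.rangeRestrict_injective_iff.mpr hρ)))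

/-- **Mal'cev's theorem.** Every finitely generated linear group is residually finite:
if a finitely generated group `Γ` embeds in `GL(n, F)` for some field `F`, then for every
`γ ≠ 1` in `Γ` there is a homomorphism `φ` from `Γ` to a finite group `Q` with `φ γ ≠ 1`. -/
theorem malcev_linear_residually_finite (Γ : Type) [Group Γ] (hfg : Group.FG Γ)
    (F : Type) [Field F] (n : ℕ)
    (ρ : Γ →* Matrix.GeneralLinearGroup (Fin n) F) (hρ : Function.Injective ρ) :
    ∀ γ : Γ, γ ≠ 1 →
      ∃ (Q : Type) (_ : Group Q) (_ : Finite Q) (φ : Γ →* Q), φ γ ≠ 1 := by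
  have := malcev_linear_residually_finite_general ρ hρ
  exact fun _ => exists_finite_monoidHom_ne_one
end
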